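/- arXiv:1309.6178 — 2 statements merged into one kernel-verified Lean document; each statement's English description precedes it below -/
import Mathlib

section
/- In the simplified model, there are constants C > 0 and N such that for all n ≥ N and all 2 ≤ i ≤ m, the pre-averaged Brownian part satisfies |E[X̄_{i,m}²] − σ²/m| ≤ C/n; that is, E[X̄_{i,m}²] = (σ²/m)∫₀² Λ(u)² du + O(1/n) = σ²/m + O(1/n) uniformly in i. -/
open MeasureTheory ProbabilityTheory Real

noncomputable section

/-- `Λ(u) = -∫₀ᵘ λ(v) dv`. -/
def bigLam (lam : ℝ → ℝ) (u : ℝ) : ℝ := -∫ v in (0:ℝ)..u, lam v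

/-- A (normalized) pre-average function: piecewise Lipschitz on `[0,2]`,
antisymmetric about `1`, and normalized. -/
structure IsPreAverageFn (lam : ℝ → ℝ) : Prop where
  piecewise_lipschitz : ∃ (N : ℕ) (t : ℕ → ℝ) (K : NNReal),
      0 < N ∧ t 0 = 0 ∧ t N = 2 ∧ (∀ i < N, t i < t (i + 1)) ∧
      ∀ i < N, LipschitzOnWith K lam (Set.Ioo (t i) (t (i + 1)))
  antisymm : ∀ t ∈ Set.Icc (0:ℝ) 1, lam t = - lam (2 - t)
  normalized : Real.sqrt (2 * ∫ s in (0:ℝ)..1, (∫ u in (0:ℝ)..s, lam u) ^ 2) = 1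

/-- `m = n / ⌊√n / c⌋`. -/
def mOf (c : ℝ) (n : ℕ) : ℕ := n / ⌊Real.sqrt n / c⌋₊

/-- The indices `j` with `j/n ∈ [(i-2)/m , i/m]`. -/
def blockIdx (n m i : ℕ) : Finset ℕ :=
  (Finset.range (n + 1)).filter fun j =>
    ((i : ℝ) - 2) / m ≤ (j : ℝ) / n ∧ (j : ℝ) / n ≤ (i : ℝ) / m

variable {Ω : Type*}

/-- Pre-averaged value `Ā_{i,m} = (m/n) ∑_{j/n ∈ [(i-2)/m, i/m]} λ(m j/n - (i-2)) A_j`. -/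
def preAvg (lam : ℝ → ℝ) (n m : ℕ) (A : ℕ → Ω → ℝ) (i : ℕ) (ω : Ω) : ℝ :=
  ((m : ℝ) / n) * ∑ j ∈ blockIdx n m i,
    lam ((m : ℝ) * j / n - ((i : ℝ) - 2)) * A j ω

/-- Bias correction `𝔟(λ, A)_{i,m}`. -/
def biasCorr (lam : ℝ → ℝ) (n m : ℕ) (A : ℕ → Ω → ℝ) (i : ℕ) (ω : Ω) : ℝ :=
  ((m : ℝ) ^ 2 / (2 * (n : ℝ) ^ 2)) * ∑ j ∈ (blockIdx n m i).filter (fun j => 1 ≤ j),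
    (lam ((m : ℝ) * j / n - ((i : ℝ) - 2))) ^ 2 * (A j ω - A (j - 1) ω) ^ 2

/-- The simplified model: `(W_{j/n})_j` and `(η_{j,n})_j` form a centered jointly Gaussian
family with `Cov(W_{j/n}, W_{l/n}) = min(j,l)/n`, `(η_{j,n})` standard Gaussian i.i.d.
and uncorrelated with the `W` grid values. -/
def IsSimplifiedModel [MeasureSpace Ω] (n : ℕ) (W η : ℕ → Ω → ℝ) : Prop :=
  (∀ j, Measurable (W j)) ∧ (∀ j, Measurable (η j)) ∧
  (∀ a b : ℕ → ℝ, ∃ v : NNReal,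
    Measure.map (fun ω => ∑ j ∈ Finset.range (n + 1), (a j * W j ω + b j * η j ω)) ℙ
      = gaussianReal 0 v) ∧
  (∀ j l, j ≤ n → l ≤ n → ∫ ω, W j ω * W l ω = (min j l : ℝ) / n) ∧
  (∀ j l, j ≤ n → l ≤ n → ∫ ω, η j ω * η l ω = if j = l then 1 else 0) ∧
  (∀ j l, j ≤ n → l ≤ n → ∫ ω, W j ω * η l ω = 0)

/-- The observations `Y_{j,n} = σ W_{j/n} + τ η_{j,n}`. -/
def obs (σ τ : ℝ) (W η : ℕ → Ω → ℝ) (j : ℕ) (ω : Ω) : ℝ := σ * W j ω + τ * η j ω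

end

/-!
Split a grid value of `W` in block `i` into its value at the left end of the block and an increment.
The increments have the covariance `min`, and `∑ w_j w_l min x_j x_l = ∫ (∑_{x_j ≥ u} w_j)² du`.
So the second moment is exactly `σ²/m (∫ D(u)² du + (i - 2) D(0)²)`, with `D(u)` a Riemann sum of
mesh `m/n` for `∫ v in u..2, λ v = Λ(u)`. As `λ` has bounded variation, `D - Λ = O(m/n)` uniformly
in `u` and `i`. Replacing `D` by `Λ` in the integral therefore costs `σ²/m · O(m/n) = O(1/n)`, and
since `Λ(0) = 0` the other term is at most `σ² · O(m²/n²)`, which is `O(1/n)` as `m = O(√n)`.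
-/

section BoundedVariation

open Set

variable {α E : Type*} [LinearOrder α]

lemma eVariationOn_insert_le_of_mem_upperBounds [PseudoEMetricSpace E] (f : α → E) {s : Set α}
    {x y : α} (hx : x ∈ upperBounds s) (hy : y ∈ s) :
    eVariationOn f (insert x s) ≤ 2 * eVariationOn f s + edist (f y) (f x) := by
  refine iSup_le fun ⟨n, u, hu, hus⟩ ↦ ?_
  set A := s ∩ u '' Iic n
  have hsum : ∑ i ∈ Finset.range n, edist (f (u (i + 1))) (f (u i)) ≤
      eVariationOn f (insert x A) :=
    eVariationOn.sum_le_of_monotoneOn_Iic (hu.monotoneOn _) fun i hi ↦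
      (hus i).imp_right fun hi' ↦ ⟨hi', mem_image_of_mem u hi⟩
  refine hsum.trans ?_
  rcases A.eq_empty_or_nonempty with hempty | hne
  · simp [hempty, eVariationOn.subsingleton]
  · obtain ⟨z, hzA, hz⟩ := exists_max_image A id (((finite_Iic n).image u).inter_of_right s) hne
    have hsplit := eVariationOn.union' f ⟨hzA, hz⟩ (isLeast_singleton (a := x)) (hx hzA.1)
    calc eVariationOn f (insert x A)
        = eVariationOn f A + edist (f z) (f x) := by
          rw [← union_singleton, hsplit, eVariationOn.subsingleton f subsingleton_singleton,
            add_zero]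
      _ ≤ eVariationOn f s + (eVariationOn f s + edist (f y) (f x)) := by
          gcongr
          · exact eVariationOn.mono f inter_subset_left
          · exact (edist_triangle _ (f y) _).trans
              (add_le_add_left (eVariationOn.edist_le f hzA.1 hy) _)
      _ = 2 * eVariationOn f s + edist (f y) (f x) := by ring

variable [PseudoMetricSpace E] {f : α → E} {s : Set α}

lemma boundedVariationOn_insert_of_mem_upperBounds (hf : BoundedVariationOn f s) {x : α}
    (hx : x ∈ upperBounds s) : BoundedVariationOn f (insert x s) := by
  rcases s.eq_empty_or_nonempty with rfl | ⟨y, hy⟩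
  · exact .of_subsingleton (by simp)
  · exact ne_top_of_le_ne_top
      (ENNReal.add_ne_top.2 ⟨ENNReal.mul_ne_top ENNReal.ofNat_ne_top hf, edist_ne_top _ _⟩)
      (eVariationOn_insert_le_of_mem_upperBounds f hx hy)

lemma boundedVariationOn_insert_of_mem_lowerBounds (hf : BoundedVariationOn f s) {x : α}
    (hx : x ∈ lowerBounds s) : BoundedVariationOn f (insert x s) := by
  have hdual := boundedVariationOn_insert_of_mem_upperBounds hf.ofDual (x := OrderDual.toDual x)
    (by intro y hy; exact hx hy)
  rw [BoundedVariationOn, ← eVariationOn.comp_ofDual]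
  exact hdual

lemma boundedVariationOn_Icc_of_Ioo {a b : α} (hab : a < b)
    (hf : BoundedVariationOn f (Ioo a b)) : BoundedVariationOn f (Icc a b) := by
  rw [← Ioc_insert_left hab.le, ← Ioo_insert_right hab]
  refine boundedVariationOn_insert_of_mem_lowerBounds
    (boundedVariationOn_insert_of_mem_upperBounds hf fun y hy ↦ hy.2.le) ?_
  rw [Ioo_insert_right hab]
  exact fun y hy ↦ hy.1.le

lemma boundedVariationOn_Icc_of_forall_lt {t : ℕ → α} {N : ℕ} (ht : ∀ i < N, t i ≤ t (i + 1))
    (hf : ∀ i < N, BoundedVariationOn f (Icc (t i) (t (i + 1)))) :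
    BoundedVariationOn f (Icc (t 0) (t N)) := by
  suffices h : ∀ k ≤ N, t 0 ≤ t k ∧ BoundedVariationOn f (Icc (t 0) (t k)) from (h N le_rfl).2
  intro k hk
  induction k with
  | zero => exact ⟨le_rfl, .of_subsingleton (by simp)⟩
  | succ k ih =>
    obtain ⟨hle, hbv⟩ := ih (by lia)
    have hstep := ht k hk
    refine ⟨hle.trans hstep, ?_⟩
    rw [← Icc_union_Icc_eq_Icc hle hstep, BoundedVariationOn,
      eVariationOn.union f (isGreatest_Icc hle) (isLeast_Icc hstep)]
    exact ENNReal.add_ne_top.2 ⟨hbv, hf k hk⟩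

end BoundedVariation

section BoundedVariationIndicator

open Set

variable {α E : Type*} [LinearOrder α] [SeminormedAddCommGroup E] {f : α → E}

-- Collapsing everything left of `u` to a zero `x₀` of `f` is monotone, and composing `f` with this
-- map truncates `f`.
lemma eVariationOn_indicator_Ici_le {x₀ u : α} (hx₀ : x₀ ≤ u) (hf : f x₀ = 0) :
    eVariationOn ((Ici u).indicator f) univ ≤ eVariationOn f univ := by
  have hcollapse : (Ici u).indicator f = f ∘ fun x ↦ if u ≤ x then x else x₀ := by
    ext x
    by_cases hx : u ≤ x <;> simp [hx, hf]
  rw [hcollapse]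
  refine eVariationOn.comp_le_of_monotoneOn f _ (fun x _ y _ hxy ↦ ?_) (mapsTo_univ _ _)
  split_ifs with hux huy huy
  · exact hxy
  · exact absurd (hux.trans hxy) huy
  · exact hx₀.trans huy
  · exact le_rfl

lemma boundedVariationOn_indicator_Icc [NoMinOrder α] [NoMaxOrder α] {a b : α}
    (hf : BoundedVariationOn f (Icc a b)) :
    BoundedVariationOn ((Icc a b).indicator f) univ := by
  obtain ⟨a', ha'⟩ := exists_lt (min a b)
  obtain ⟨b', hb'⟩ := exists_gt b
  obtain ⟨ha'a, ha'b⟩ := lt_min_iff.1 ha'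
  set g := (Icc a b).indicator f
  let φ : α → α := fun x ↦ if x < a then a' else if b < x then b' else x
  have hφ : g = g ∘ φ := by
    ext x
    by_cases hxa : x < a
    · simp [g, φ, hxa, ha'a]
    · by_cases hbx : b < x
      · simp [g, φ, hxa, hbx, hb'.not_ge]
      · simp [φ, hxa, hbx]
  have hmono : Monotone φ := by
    intro x y hxy
    simp only [φ]
    split_ifs <;> order
  have hmaps : MapsTo φ univ (insert a' (insert b' (Icc a b))) := by
    intro x _
    simp only [φ, mem_insert_iff, mem_Icc]
    split_ifs with hxa hbx <;> grind
  have hbv : BoundedVariationOn g (insert a' (insert b' (Icc a b))) := by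
    refine boundedVariationOn_insert_of_mem_lowerBounds
      (boundedVariationOn_insert_of_mem_upperBounds ?_ fun y hy ↦ hy.2.trans hb'.le) ?_
    · rwa [BoundedVariationOn, eVariationOn.congr (g := f) fun x hx ↦ indicator_of_mem hx f]
    · rintro y (rfl | hy)
      · exact (ha'b.trans hb').le
      · exact ha'a.le.trans hy.1
  rw [hφ]
  exact ne_top_of_le_ne_top hbv
    (eVariationOn.comp_le_of_monotoneOn g φ (hmono.monotoneOn _) hmaps)

end BoundedVariationIndicator

section RiemannSum

open Set

variable {f : ℝ → ℝ} {a h : ℝ}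

lemma intervalIntegrable_of_boundedVariationOn {b : ℝ} (hf : BoundedVariationOn f (uIcc a b)) :
    IntervalIntegrable f volume a b := by
  obtain ⟨p, q, hp, hq, rfl⟩ := hf.locallyBoundedVariationOn.exists_monotoneOn_sub_monotoneOn
  exact hp.intervalIntegrable.sub hq.intervalIntegrable

lemma abs_mul_sub_integral_le (hh : 0 ≤ h) (hf : BoundedVariationOn f (Icc a (a + h))) :
    |h * f a - ∫ x in a..a + h, f x| ≤ h * (eVariationOn f (Icc a (a + h))).toReal := by
  have hle : a ≤ a + h := by linarith
  have hint : IntervalIntegrable f volume a (a + h) :=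
    intervalIntegrable_of_boundedVariationOn (by rwa [uIcc_of_le hle])
  have hconst : h * f a = ∫ _ in a..a + h, f a := by simp
  rw [hconst, ← intervalIntegral.integral_sub intervalIntegrable_const hint, ← Real.norm_eq_abs]
  refine (intervalIntegral.norm_integral_le_of_norm_le_const fun x hx ↦ ?_).trans_eq
    (by rw [add_sub_cancel_left, abs_of_nonneg hh, mul_comm])
  rw [uIoc_of_le hle] at hx
  exact hf.dist_le (left_mem_Icc.2 hle) (Ioc_subset_Icc_self hx)

lemma abs_mul_sum_sub_integral_le (hh : 0 ≤ h) (J : ℕ)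
    (hf : BoundedVariationOn f (Icc a (a + h * J))) :
    |h * ∑ j ∈ Finset.range J, f (a + h * j) - ∫ x in a..a + h * J, f x| ≤
      h * (eVariationOn f (Icc a (a + h * J))).toReal := by
  set p : ℕ → ℝ := fun j ↦ a + h * j with hp
  have hstep (j : ℕ) : p (j + 1) = p j + h := by simp only [hp]; push_cast; ring
  have hmono : Monotone p := monotone_nat_of_le_succ fun j ↦ by rw [hstep]; linarith
  have hzero : p 0 = a := by simp [hp]
  have hcell (j : ℕ) (hj : j < J) : BoundedVariationOn f (Icc (p j) (p (j + 1))) :=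
    hf.mono (Icc_subset_Icc (hzero ▸ hmono j.zero_le) (hmono hj))
  have hint := intervalIntegral.sum_integral_adjacent_intervals (n := J) (μ := volume) fun j hj ↦
    intervalIntegrable_of_boundedVariationOn
      (by rw [uIcc_of_le (hmono j.le_succ)]; exact hcell j hj)
  have hvar := eVariationOn.sum' f hmono (n := J)
  rw [hzero] at hint hvar
  calc |h * ∑ j ∈ Finset.range J, f (p j) - ∫ x in a..p J, f x|
      = |∑ j ∈ Finset.range J, (h * f (p j) - ∫ x in p j..p (j + 1), f x)| := by
        rw [Finset.sum_sub_distrib, hint, Finset.mul_sum]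
    _ ≤ ∑ j ∈ Finset.range J, h * (eVariationOn f (Icc (p j) (p (j + 1)))).toReal := by
        refine (Finset.abs_sum_le_sum_abs _ _).trans (Finset.sum_le_sum fun j hj ↦ ?_)
        have hj' := hcell j (Finset.mem_range.1 hj)
        rw [hstep] at hj' ⊢
        exact abs_mul_sub_integral_le hh hj'
    _ = h * (eVariationOn f (Icc a (p J))).toReal := by
        rw [← Finset.mul_sum, ← hvar,
          ENNReal.toReal_sum fun j hj ↦ hcell j (Finset.mem_range.1 hj)]

end RiemannSum

section MinKernel

open Set

variable {ι : Type*} {s : Finset ι} {x : ι → ℝ}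

lemma sq_sum_filter_le_eq_sum_indicator (w : ι → ℝ) (u : ℝ) :
    (∑ j ∈ s with u ≤ x j, w j) ^ 2 =
      ∑ p ∈ s ×ˢ s, (Iic (min (x p.1) (x p.2))).indicator (fun _ ↦ w p.1 * w p.2) u := by
  rw [sq, Finset.sum_filter, Finset.sum_mul_sum, Finset.sum_product]
  refine Finset.sum_congr rfl fun j _ ↦ Finset.sum_congr rfl fun l _ ↦ ?_
  by_cases hj : u ≤ x j <;> by_cases hl : u ≤ x l <;> simp [hj, hl]

lemma intervalIntegrable_indicator_Iic_const (r k a b : ℝ) :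
    IntervalIntegrable ((Iic r).indicator fun _ ↦ k) volume a b :=
  intervalIntegrable_iff.2
    ((intervalIntegrable_iff.1 intervalIntegrable_const).indicator measurableSet_Iic)

lemma intervalIntegrable_sq_sum_filter_le (w : ι → ℝ) (a b : ℝ) :
    IntervalIntegrable (fun u ↦ (∑ j ∈ s with u ≤ x j, w j) ^ 2) volume a b := by
  simp_rw [sq_sum_filter_le_eq_sum_indicator, ← Finset.sum_apply]
  exact .sum _ fun p _ ↦ intervalIntegrable_indicator_Iic_const _ _ a b

lemma integral_sq_sum_filter_le {R : ℝ} (w : ι → ℝ) (hx : ∀ j ∈ s, x j ∈ Icc 0 R) :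
    ∫ u in (0 : ℝ)..R, (∑ j ∈ s with u ≤ x j, w j) ^ 2 =
      ∑ j ∈ s, ∑ l ∈ s, w j * w l * min (x j) (x l) := by
  simp_rw [sq_sum_filter_le_eq_sum_indicator]
  rw [intervalIntegral.integral_finsetSum
    fun p _ ↦ intervalIntegrable_indicator_Iic_const _ _ 0 R, Finset.sum_product]
  refine Finset.sum_congr rfl fun j hj ↦ Finset.sum_congr rfl fun l hl ↦ ?_
  have hmin : min (x j) (x l) ∈ Icc 0 R :=
    ⟨le_min (hx j hj).1 (hx l hl).1, (min_le_left _ _).trans (hx j hj).2⟩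
  refine (intervalIntegral.integral_indicator hmin).trans ?_
  rw [intervalIntegral.integral_const, smul_eq_mul, sub_zero, mul_comm]

end MinKernel

section SecondMoment

open Set

variable {ι Ω : Type*} [MeasurableSpace Ω] {μ : Measure Ω} {s : Finset ι} {X : ι → Ω → ℝ}

lemma integral_sq_sum_mul (hX : ∀ j ∈ s, MemLp (X j) 2 μ) (a : ι → ℝ) :
    ∫ ω, (∑ j ∈ s, a j * X j ω) ^ 2 ∂μ =
      ∑ j ∈ s, ∑ l ∈ s, a j * a l * ∫ ω, X j ω * X l ω ∂μ := by
  have hint (p : ι × ι) (hp : p ∈ s ×ˢ s) :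
      Integrable (fun ω ↦ a p.1 * a p.2 * (X p.1 ω * X p.2 ω)) μ := by
    obtain ⟨hj, hl⟩ := Finset.mem_product.1 hp
    exact ((hX _ hj).integrable_mul (hX _ hl)).const_mul _
  calc ∫ ω, (∑ j ∈ s, a j * X j ω) ^ 2 ∂μ
      = ∫ ω, ∑ p ∈ s ×ˢ s, a p.1 * a p.2 * (X p.1 ω * X p.2 ω) ∂μ := by
        simp_rw [sq, Finset.sum_mul_sum, Finset.sum_product, mul_mul_mul_comm]
    _ = ∑ j ∈ s, ∑ l ∈ s, a j * a l * ∫ ω, X j ω * X l ω ∂μ := by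
        rw [integral_finsetSum _ hint, Finset.sum_product]
        simp_rw [integral_const_mul]

-- A Brownian motion at time `b + x` is its value at time `b` plus the increment over `[b, b + x]`;
-- the two summands are the contributions of the increment and of the initial value.
lemma integral_sq_sum_mul_of_min_covariance {x : ι → ℝ} {r b R : ℝ}
    (hX : ∀ j ∈ s, MemLp (X j) 2 μ) (hx : ∀ j ∈ s, x j ∈ Icc 0 R)
    (hcov : ∀ j ∈ s, ∀ l ∈ s, ∫ ω, X j ω * X l ω ∂μ = r * (b + min (x j) (x l))) (a : ι → ℝ) :
    ∫ ω, (∑ j ∈ s, a j * X j ω) ^ 2 ∂μ =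
      r * ((∫ u in (0 : ℝ)..R, (∑ j ∈ s with u ≤ x j, a j) ^ 2) + b * (∑ j ∈ s, a j) ^ 2) := by
  rw [integral_sq_sum_mul hX, integral_sq_sum_filter_le a hx, sq, Finset.sum_mul_sum, mul_add]
  simp_rw [Finset.mul_sum, ← Finset.sum_add_distrib]
  refine Finset.sum_congr rfl fun j hj ↦ Finset.sum_congr rfl fun l hl ↦ ?_
  rw [hcov j hj l hl]
  ring

end SecondMoment

/-- The position of the grid point `j / n` in the rescaled time of block `i`, in which the block
`[(i - 2) / m, i / m]` becomes `[0, 2]`. -/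
noncomputable def blockPos (n m i j : ℕ) : ℝ := (m : ℝ) * j / n - ((i : ℝ) - 2)

/-- The Riemann sum over the grid points of block `i` of the integral `∫ v in u..2, lam v`, which
equals `bigLam lam u` when `lam` integrates to zero over `[0, 2]`. -/
noncomputable def discreteBigLam (lam : ℝ → ℝ) (n m i : ℕ) (u : ℝ) : ℝ :=
  (m : ℝ) / n * ∑ j ∈ blockIdx n m i with u ≤ blockPos n m i j, lam (blockPos n m i j)

section DiscreteBigLam

open Set

variable {n m i : ℕ}

lemma blockPos_eq_add_mul (n m i j : ℕ) : blockPos n m i j = -((i : ℝ) - 2) + (m : ℝ) / n * j := by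
  rw [blockPos]
  ring

lemma mem_blockIdx_iff (hm : 0 < m) {j : ℕ} :
    j ∈ blockIdx n m i ↔ j ≤ n ∧ blockPos n m i j ∈ Icc 0 2 := by
  have hm' : (0 : ℝ) < m := by exact_mod_cast hm
  have hlower : ((i : ℝ) - 2) / m ≤ (j : ℝ) / n ↔ 0 ≤ blockPos n m i j := by
    rw [blockPos, div_le_iff₀ hm', sub_nonneg, div_mul_eq_mul_div, mul_comm (j : ℝ)]
  have hupper : (j : ℝ) / n ≤ (i : ℝ) / m ↔ blockPos n m i j ≤ 2 := by
    rw [blockPos, le_div_iff₀ hm', sub_le_iff_le_add, div_mul_eq_mul_div, mul_comm (j : ℝ),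
      add_sub_cancel]
  rw [blockIdx, Finset.mem_filter, Finset.mem_range, Nat.lt_succ_iff, hlower, hupper, mem_Icc]

lemma discreteBigLam_zero (hm : 0 < m) (lam : ℝ → ℝ) :
    discreteBigLam lam n m i 0 = (m : ℝ) / n * ∑ j ∈ blockIdx n m i, lam (blockPos n m i j) := by
  rw [discreteBigLam, Finset.filter_true_of_mem fun j hj ↦ ((mem_blockIdx_iff hm).1 hj).2.1]

lemma intervalIntegrable_discreteBigLam_sq (lam : ℝ → ℝ) (n m i : ℕ) (a b : ℝ) :
    IntervalIntegrable (fun u ↦ discreteBigLam lam n m i u ^ 2) volume a b := by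
  simp_rw [discreteBigLam, mul_pow]
  exact (intervalIntegrable_sq_sum_filter_le _ a b).const_mul _

lemma integral_preAvg_sq {Ω : Type*} [MeasurableSpace Ω] {μ : Measure Ω} {W : ℕ → Ω → ℝ}
    (hn : 0 < n) (hm : 0 < m) (hW : ∀ j ≤ n, MemLp (W j) 2 μ)
    (hcov : ∀ j ≤ n, ∀ l ≤ n, ∫ ω, W j ω * W l ω ∂μ = (min j l : ℝ) / n) (lam : ℝ → ℝ) (σ : ℝ) :
    ∫ ω, preAvg lam n m (fun j ω ↦ σ * W j ω) i ω ^ 2 ∂μ =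
      σ ^ 2 / m * ((∫ u in (0 : ℝ)..2, discreteBigLam lam n m i u ^ 2) +
        ((i : ℝ) - 2) * discreteBigLam lam n m i 0 ^ 2) := by
  have hn' : (n : ℝ) ≠ 0 := by exact_mod_cast hn.ne'
  have hm' : (m : ℝ) ≠ 0 := by exact_mod_cast hm.ne'
  have hmem {j : ℕ} (hj : j ∈ blockIdx n m i) := (mem_blockIdx_iff hm).1 hj
  have hcov' : ∀ j ∈ blockIdx n m i, ∀ l ∈ blockIdx n m i,
      ∫ ω, W j ω * W l ω ∂μ =
        1 / m * (((i : ℝ) - 2) + min (blockPos n m i j) (blockPos n m i l)) := by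
    intro j hj l hl
    rw [hcov j (hmem hj).1 l (hmem hl).1, blockPos_eq_add_mul, blockPos_eq_add_mul,
      min_add_add_left, ← mul_min_of_nonneg _ _ (by positivity)]
    field_simp
    ring
  have hsum (t : Finset ℕ) : ∑ j ∈ t, σ * ((m : ℝ) / n * lam (blockPos n m i j)) =
      σ * ((m : ℝ) / n * ∑ j ∈ t, lam (blockPos n m i j)) := by
    rw [Finset.mul_sum, Finset.mul_sum]
  have hpreAvg (ω : Ω) : preAvg lam n m (fun j ω ↦ σ * W j ω) i ω =
      ∑ j ∈ blockIdx n m i, σ * ((m : ℝ) / n * lam (blockPos n m i j)) * W j ω := by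
    rw [preAvg, Finset.mul_sum]
    refine Finset.sum_congr rfl fun j _ ↦ ?_
    rw [blockPos]
    ring
  simp_rw [hpreAvg]
  rw [integral_sq_sum_mul_of_min_covariance (fun j hj ↦ hW j (hmem hj).1)
    (fun j hj ↦ (hmem hj).2) hcov']
  simp_rw [hsum, mul_pow σ, intervalIntegral.integral_const_mul]
  rw [discreteBigLam_zero hm]
  simp_rw [discreteBigLam]
  ring

lemma discreteBigLam_eq_sum_indicator (hm : 0 < m) (lam : ℝ → ℝ) (u : ℝ) :
    discreteBigLam lam n m i u =
      (m : ℝ) / n * ∑ j ∈ Finset.range (n + 1),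
        (Ici u).indicator ((Icc 0 2).indicator lam) (-((i : ℝ) - 2) + (m : ℝ) / n * j) := by
  have hidx : {j ∈ blockIdx n m i | u ≤ blockPos n m i j} =
      {j ∈ Finset.range (n + 1) | blockPos n m i j ∈ Ici u ∩ Icc 0 2} := by
    ext j
    simp only [Finset.mem_filter, mem_blockIdx_iff hm, Finset.mem_range, Nat.lt_succ_iff,
      mem_inter_iff, mem_Ici]
    tauto
  simp_rw [discreteBigLam, hidx, Finset.sum_filter, indicator_indicator, ← blockPos_eq_add_mul,
    indicator_apply]

end DiscreteBigLam

section BigLam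

open Set

variable {lam : ℝ → ℝ} {u : ℝ}

lemma bigLam_eq_integral_indicator (hint : IntervalIntegrable lam volume 0 2)
    (hzero : ∫ v in (0 : ℝ)..2, lam v = 0) (hu : u ∈ Icc 0 2) {a b : ℝ} (ha : a ≤ u) (hb : 2 ≤ b) :
    bigLam lam u = ∫ x in a..b, (Ici u).indicator ((Icc 0 2).indicator lam) x := by
  have hinter : Icc a b ∩ (Ici u ∩ Icc 0 2) = Icc u 2 := by
    ext x
    simp only [mem_inter_iff, mem_Icc, mem_Ici]
    grind
  have hsub : u ∈ uIcc 0 2 := by rwa [uIcc_of_le zero_le_two]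
  have hsplit := intervalIntegral.integral_add_adjacent_intervals
    (hint.mono_set (uIcc_subset_uIcc left_mem_uIcc hsub))
    (hint.mono_set (uIcc_subset_uIcc hsub right_mem_uIcc))
  calc bigLam lam u = ∫ v in u..2, lam v := by rw [bigLam]; linarith
    _ = ∫ x in a..b, (Ici u).indicator ((Icc 0 2).indicator lam) x := by
        rw [intervalIntegral.integral_of_le hu.2, intervalIntegral.integral_of_le (by grind),
          ← integral_Icc_eq_integral_Ioc, ← integral_Icc_eq_integral_Ioc, indicator_indicator,
          setIntegral_indicator (measurableSet_Ici.inter measurableSet_Icc), hinter]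

lemma continuousOn_bigLam (hint : IntervalIntegrable lam volume 0 2) :
    ContinuousOn (bigLam lam) (Icc 0 2) := by
  have hprim := intervalIntegral.continuousOn_primitive_interval' hint left_mem_uIcc
  rw [uIcc_of_le zero_le_two] at hprim
  exact hprim.neg

lemma intervalIntegrable_bigLam_sq (hint : IntervalIntegrable lam volume 0 2) :
    IntervalIntegrable (fun u ↦ bigLam lam u ^ 2) volume 0 2 :=
  ((continuousOn_bigLam hint).pow 2).intervalIntegrable_of_Icc zero_le_two

end BigLam

section ErrorBounds

open Set

variable {lam : ℝ → ℝ} {n m i : ℕ} {u : ℝ}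

lemma abs_le_toReal_eVariationOn_indicator_Icc {a b x : ℝ}
    (hlam : BoundedVariationOn lam (Icc a b)) (hx : x ∈ Icc a b) :
    |lam x| ≤ (eVariationOn ((Icc a b).indicator lam) univ).toReal := by
  have hdist := (boundedVariationOn_indicator_Icc hlam).dist_le (mem_univ x) (mem_univ (b + 1))
  rwa [indicator_of_mem hx, indicator_of_notMem (by simp), dist_zero_right, Real.norm_eq_abs]
    at hdist

lemma abs_bigLam_le (hlam : BoundedVariationOn lam (Icc 0 2)) (hu : u ∈ Icc 0 2) :
    |bigLam lam u| ≤ 2 * (eVariationOn ((Icc 0 2).indicator lam) univ).toReal := by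
  set T := (eVariationOn ((Icc (0 : ℝ) 2).indicator lam) univ).toReal
  have hnorm : ‖∫ v in (0 : ℝ)..u, lam v‖ ≤ T * |u - 0| := by
    refine intervalIntegral.norm_integral_le_of_norm_le_const fun x hx ↦ ?_
    rw [uIoc_of_le hu.1] at hx
    exact abs_le_toReal_eVariationOn_indicator_Icc hlam ⟨hx.1.le, hx.2.trans hu.2⟩
  rw [bigLam, abs_neg, ← Real.norm_eq_abs]
  calc ‖∫ v in (0 : ℝ)..u, lam v‖ ≤ T * |u - 0| := hnorm
    _ = u * T := by rw [sub_zero, abs_of_nonneg hu.1, mul_comm]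
    _ ≤ 2 * T := mul_le_mul_of_nonneg_right hu.2 ENNReal.toReal_nonneg

lemma abs_discreteBigLam_sub_bigLam_le (hlam : BoundedVariationOn lam (Icc 0 2))
    (hzero : ∫ v in (0 : ℝ)..2, lam v = 0) (hn : 0 < n) (hi : 2 ≤ i) (him : i ≤ m)
    (hu : u ∈ Icc 0 2) :
    |discreteBigLam lam n m i u - bigLam lam u| ≤
      (m : ℝ) / n * (eVariationOn ((Icc 0 2).indicator lam) univ).toReal := by
  have hn' : (n : ℝ) ≠ 0 := by exact_mod_cast hn.ne'
  have hi' : (2 : ℝ) ≤ i := by exact_mod_cast hi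
  have him' : (i : ℝ) ≤ m := by exact_mod_cast him
  have hbv := boundedVariationOn_indicator_Icc hlam
  set g := (Icc 0 2).indicator lam with hg
  have htrunc (s : Set ℝ) : eVariationOn ((Ici u).indicator g) s ≤ eVariationOn g univ :=
    (eVariationOn.mono _ (subset_univ s)).trans
      (eVariationOn_indicator_Ici_le (x₀ := -1) (by linarith [hu.1]) (by simp [hg]))
  set a := -((i : ℝ) - 2)
  have hstart : a ≤ u := by linarith [hu.1]
  have hend : 2 ≤ a + (m : ℝ) / n * (n + 1 : ℕ) := by
    have : (m : ℝ) / n * (n + 1 : ℕ) = m + m / n := by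
      rw [Nat.cast_succ, mul_add, div_mul_cancel₀ _ hn', mul_one]
    have : (0 : ℝ) ≤ m / n := by positivity
    linarith
  rw [discreteBigLam_eq_sum_indicator (by lia), bigLam_eq_integral_indicator
    (intervalIntegrable_of_boundedVariationOn (by rwa [uIcc_of_le zero_le_two])) hzero hu hstart
    hend]
  refine (abs_mul_sum_sub_integral_le (by positivity) (n + 1)
    (ne_top_of_le_ne_top hbv (htrunc _))).trans ?_
  gcongr
  exact htrunc _

lemma abs_discreteBigLam_sq_sub_bigLam_sq_le (hlam : BoundedVariationOn lam (Icc 0 2))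
    (hzero : ∫ v in (0 : ℝ)..2, lam v = 0) (hn : 0 < n) (hmn : m ≤ n) (hi : 2 ≤ i) (him : i ≤ m)
    (hu : u ∈ Icc 0 2) :
    |discreteBigLam lam n m i u ^ 2 - bigLam lam u ^ 2| ≤
      5 * ((m : ℝ) / n) * (eVariationOn ((Icc 0 2).indicator lam) univ).toReal ^ 2 := by
  set T := (eVariationOn ((Icc (0 : ℝ) 2).indicator lam) univ).toReal
  have : 0 ≤ T := ENNReal.toReal_nonneg
  have hratio : (m : ℝ) / n ≤ 1 := div_le_one_of_le₀ (by exact_mod_cast hmn) n.cast_nonneg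
  have hdiff := abs_discreteBigLam_sub_bigLam_le hlam hzero hn hi him hu
  have hsum : |discreteBigLam lam n m i u + bigLam lam u| ≤ 5 * T := by
    calc |discreteBigLam lam n m i u + bigLam lam u|
        = |discreteBigLam lam n m i u - bigLam lam u + 2 * bigLam lam u| := by ring_nf
      _ ≤ |discreteBigLam lam n m i u - bigLam lam u| + 2 * |bigLam lam u| :=
          (abs_add_le _ _).trans_eq (by rw [abs_mul, abs_two])
      _ ≤ 1 * T + 2 * (2 * T) := by
          gcongr
          · exact hdiff.trans (by gcongr)
          · exact abs_bigLam_le hlam hu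
      _ = 5 * T := by ring
  calc |discreteBigLam lam n m i u ^ 2 - bigLam lam u ^ 2|
      = |discreteBigLam lam n m i u + bigLam lam u| *
          |discreteBigLam lam n m i u - bigLam lam u| := by rw [sq_sub_sq, abs_mul]
    _ ≤ 5 * T * ((m : ℝ) / n * T) := by gcongr
    _ = 5 * ((m : ℝ) / n) * T ^ 2 := by ring

lemma abs_integral_discreteBigLam_sq_sub_le (hlam : BoundedVariationOn lam (Icc 0 2))
    (hzero : ∫ v in (0 : ℝ)..2, lam v = 0) (hn : 0 < n) (hmn : m ≤ n) (hi : 2 ≤ i) (him : i ≤ m) :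
    |(∫ u in (0 : ℝ)..2, discreteBigLam lam n m i u ^ 2) - ∫ u in (0 : ℝ)..2, bigLam lam u ^ 2| ≤
      10 * ((m : ℝ) / n) * (eVariationOn ((Icc 0 2).indicator lam) univ).toReal ^ 2 := by
  have hint := intervalIntegrable_of_boundedVariationOn (by rwa [uIcc_of_le zero_le_two])
  rw [← intervalIntegral.integral_sub (intervalIntegrable_discreteBigLam_sq lam n m i 0 2)
    (intervalIntegrable_bigLam_sq hint), ← Real.norm_eq_abs]
  refine (intervalIntegral.norm_integral_le_of_norm_le_const fun u hu ↦ ?_).trans_eq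
    (b := 5 * ((m : ℝ) / n) * (eVariationOn ((Icc 0 2).indicator lam) univ).toReal ^ 2 * |2 - 0|)
    (by norm_num; ring)
  rw [uIoc_of_le zero_le_two] at hu
  exact abs_discreteBigLam_sq_sub_bigLam_sq_le hlam hzero hn hmn hi him (Ioc_subset_Icc_self hu)

end ErrorBounds

section SecondMomentBound

open Set

variable {lam : ℝ → ℝ}

lemma mOf_sq_le {c : ℝ} {n : ℕ} (hc : 0 < c) (hn : 4 * c ^ 2 ≤ n) :
    (mOf c n : ℝ) ^ 2 ≤ 4 * c ^ 2 * n := by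
  set k := ⌊√n / c⌋₊
  have htwo : 2 ≤ √n / c := (le_div_iff₀ hc).2 (Real.le_sqrt_of_sq_le (by linarith))
  have hfloor : √n / c ≤ 2 * k := by linarith [Nat.lt_floor_add_one (√n / c)]
  have hmul : (mOf c n : ℝ) * k ≤ n := by exact_mod_cast Nat.div_mul_le_self n k
  have hlinear : (mOf c n : ℝ) * √n ≤ 2 * c * n := by
    calc (mOf c n : ℝ) * √n = c * (mOf c n * (√n / c)) := by field_simp
      _ ≤ c * (mOf c n * (2 * k)) := by gcongr
      _ ≤ 2 * c * n := by nlinarith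
  have hn' : (0 : ℝ) < n := (by positivity : 0 < 4 * c ^ 2).trans_le hn
  refine le_of_mul_le_mul_right ?_ hn'
  calc (mOf c n : ℝ) ^ 2 * n = (mOf c n * √n) ^ 2 := by rw [mul_pow, Real.sq_sqrt hn'.le]
    _ ≤ (2 * c * n) ^ 2 := by gcongr
    _ = 4 * c ^ 2 * n * n := by ring

lemma abs_integral_preAvg_sq_sub_le {Ω : Type*} [MeasurableSpace Ω] {μ : Measure Ω}
    {W : ℕ → Ω → ℝ} {n m i : ℕ} (hn : 0 < n) (hmn : m ≤ n) (hi : 2 ≤ i) (him : i ≤ m)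
    (hlam : BoundedVariationOn lam (Icc 0 2)) (hzero : ∫ v in (0 : ℝ)..2, lam v = 0)
    (hW : ∀ j ≤ n, MemLp (W j) 2 μ)
    (hcov : ∀ j ≤ n, ∀ l ≤ n, ∫ ω, W j ω * W l ω ∂μ = (min j l : ℝ) / n) (σ : ℝ) :
    |(∫ ω, preAvg lam n m (fun j ω ↦ σ * W j ω) i ω ^ 2 ∂μ) -
        σ ^ 2 / m * ∫ u in (0 : ℝ)..2, bigLam lam u ^ 2| ≤
      σ ^ 2 * (eVariationOn ((Icc 0 2).indicator lam) univ).toReal ^ 2 *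
        (10 / n + ((m : ℝ) / n) ^ 2) := by
  set T := (eVariationOn ((Icc (0 : ℝ) 2).indicator lam) univ).toReal
  have : (0 : ℝ) < n := by exact_mod_cast hn
  have hi' : (2 : ℝ) ≤ i := by exact_mod_cast hi
  have him' : (i : ℝ) ≤ m := by exact_mod_cast him
  have hm' : (0 : ℝ) < m := by linarith
  have hbias : 0 ≤ ((i : ℝ) - 2) * discreteBigLam lam n m i 0 ^ 2 :=
    mul_nonneg (by linarith) (sq_nonneg _)
  have hbias_le : ((i : ℝ) - 2) * discreteBigLam lam n m i 0 ^ 2 ≤ m * ((m : ℝ) / n * T) ^ 2 := by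
    have hstart := abs_discreteBigLam_sub_bigLam_le hlam hzero hn hi him
      (left_mem_Icc.2 zero_le_two)
    rw [bigLam, intervalIntegral.integral_same, neg_zero, sub_zero] at hstart
    rw [← sq_abs (discreteBigLam _ _ _ _ _)]
    gcongr
    linarith
  have hint := abs_integral_discreteBigLam_sq_sub_le hlam hzero hn hmn hi him
  rw [integral_preAvg_sq hn (by lia) hW hcov, ← mul_sub, abs_mul, abs_of_nonneg (by positivity),
    add_sub_right_comm]
  calc σ ^ 2 / m * |_ - _ + ((i : ℝ) - 2) * discreteBigLam lam n m i 0 ^ 2|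
      ≤ σ ^ 2 / m * (10 * ((m : ℝ) / n) * T ^ 2 + m * ((m : ℝ) / n * T) ^ 2) := by
        gcongr
        refine (abs_add_le _ _).trans (add_le_add hint ?_)
        rwa [abs_of_nonneg hbias]
    _ = σ ^ 2 * T ^ 2 * (10 / n + ((m : ℝ) / n) ^ 2) := by field_simp

theorem preAveragedBM_second_moment_general (σ c : ℝ) (hc : 0 < c) (lam : ℝ → ℝ)
    (hlam : BoundedVariationOn lam (Icc 0 2)) (hzero : ∫ v in (0 : ℝ)..2, lam v = 0)
    (Ω : ℕ → Type*) [∀ n, MeasurableSpace (Ω n)] (μ : ∀ n, Measure (Ω n))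
    (W : (n : ℕ) → ℕ → Ω n → ℝ) (hW : ∀ n, ∀ j ≤ n, MemLp (W n j) 2 (μ n))
    (hcov : ∀ n, ∀ j ≤ n, ∀ l ≤ n, ∫ ω, W n j ω * W n l ω ∂μ n = (min j l : ℝ) / n) :
    ∃ C > 0, ∃ N : ℕ, ∀ n ≥ N, ∀ i : ℕ, 2 ≤ i → i ≤ mOf c n →
      |(∫ ω, preAvg lam n (mOf c n) (fun j ω ↦ σ * W n j ω) i ω ^ 2 ∂μ n) -
        σ ^ 2 / (mOf c n : ℝ) * ∫ u in (0 : ℝ)..2, bigLam lam u ^ 2| ≤ C / n := by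
  set T := (eVariationOn ((Icc (0 : ℝ) 2).indicator lam) univ).toReal
  refine ⟨σ ^ 2 * T ^ 2 * (10 + 4 * c ^ 2) + 1, by positivity, ⌈4 * c ^ 2⌉₊,
    fun n hn i hi him ↦ ?_⟩
  have hcn : 4 * c ^ 2 ≤ n := Nat.ceil_le.1 hn
  have hn' : (0 : ℝ) < n := (by positivity : 0 < 4 * c ^ 2).trans_le hcn
  have hratio : ((mOf c n : ℝ) / n) ^ 2 ≤ 4 * c ^ 2 / n := by
    rw [div_pow, div_le_div_iff₀ (by positivity) hn']
    nlinarith [mOf_sq_le hc hcn]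
  calc |(∫ ω, preAvg lam n (mOf c n) (fun j ω ↦ σ * W n j ω) i ω ^ 2 ∂μ n) -
        σ ^ 2 / (mOf c n : ℝ) * ∫ u in (0 : ℝ)..2, bigLam lam u ^ 2|
      ≤ σ ^ 2 * T ^ 2 * (10 / n + ((mOf c n : ℝ) / n) ^ 2) :=
        abs_integral_preAvg_sq_sub_le (by exact_mod_cast hn') (Nat.div_le_self _ _) hi him hlam
          hzero (hW n) (hcov n) σ
    _ ≤ σ ^ 2 * T ^ 2 * (10 / n + 4 * c ^ 2 / n) := by gcongr
    _ ≤ (σ ^ 2 * T ^ 2 * (10 + 4 * c ^ 2) + 1) / n := by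
        rw [← add_div, mul_div_assoc']
        gcongr
        linarith

end SecondMomentBound

namespace IsPreAverageFn

open Set

variable {lam : ℝ → ℝ}

lemma boundedVariationOn (hlam : IsPreAverageFn lam) : BoundedVariationOn lam (Icc 0 2) := by
  obtain ⟨N, t, K, -, hzero, htwo, hlt, hlip⟩ := hlam.piecewise_lipschitz
  rw [← hzero, ← htwo]
  refine boundedVariationOn_Icc_of_forall_lt (fun i hi ↦ (hlt i hi).le) fun i hi ↦
    boundedVariationOn_Icc_of_Ioo (hlt i hi) ?_
  exact (hlip i hi).comp_boundedVariationOn (mapsTo_id _)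
    ((BoundedVariationOn.id_Icc _ _).mono Ioo_subset_Icc_self)

lemma intervalIntegrable (hlam : IsPreAverageFn lam) : IntervalIntegrable lam volume 0 2 :=
  intervalIntegrable_of_boundedVariationOn
    (by rw [uIcc_of_le zero_le_two]; exact hlam.boundedVariationOn)

lemma apply_two_sub (hlam : IsPreAverageFn lam) {t : ℝ} (ht : t ∈ Icc 0 2) :
    lam (2 - t) = -lam t := by
  rcases le_total t 1 with hle | hle
  · rw [hlam.antisymm t ⟨ht.1, hle⟩, neg_neg]
  · rw [hlam.antisymm (2 - t) ⟨by linarith [ht.2], by linarith⟩, sub_sub_cancel]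

lemma integral_eq_zero (hlam : IsPreAverageFn lam) : ∫ v in (0 : ℝ)..2, lam v = 0 := by
  have hreflect : ∫ v in (0 : ℝ)..2, lam (2 - v) = ∫ v in (0 : ℝ)..2, lam v := by simp
  have hneg : ∫ v in (0 : ℝ)..2, lam (2 - v) = -∫ v in (0 : ℝ)..2, lam v := by
    rw [← intervalIntegral.integral_neg]
    refine intervalIntegral.integral_congr fun v hv ↦ hlam.apply_two_sub ?_
    rwa [← uIcc_of_le zero_le_two]
  linarith

lemma bigLam_two_sub (hlam : IsPreAverageFn lam) {u : ℝ} (hu : u ∈ Icc 0 2) :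
    bigLam lam (2 - u) = bigLam lam u := by
  have hmem : u ∈ uIcc 0 2 := by rwa [uIcc_of_le zero_le_two]
  have hsplit := intervalIntegral.integral_add_adjacent_intervals
    (hlam.intervalIntegrable.mono_set (uIcc_subset_uIcc left_mem_uIcc hmem))
    (hlam.intervalIntegrable.mono_set (uIcc_subset_uIcc hmem right_mem_uIcc))
  rw [hlam.integral_eq_zero] at hsplit
  have hreflect : ∫ v in (0 : ℝ)..2 - u, lam v = -∫ v in u..2, lam v := by
    rw [← sub_self 2, ← intervalIntegral.integral_comp_sub_left, ← intervalIntegral.integral_neg]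
    refine intervalIntegral.integral_congr fun v hv ↦ hlam.apply_two_sub ?_
    rw [uIcc_of_le hu.2] at hv
    exact ⟨hu.1.trans hv.1, hv.2⟩
  rw [bigLam, bigLam]
  linarith

lemma integral_bigLam_sq (hlam : IsPreAverageFn lam) :
    ∫ u in (0 : ℝ)..2, bigLam lam u ^ 2 = 1 := by
  have hint := intervalIntegrable_bigLam_sq hlam.intervalIntegrable
  have hone : (1 : ℝ) ∈ uIcc 0 2 := by rw [uIcc_of_le zero_le_two]; norm_num
  have hreflect : ∫ u in (1 : ℝ)..2, bigLam lam u ^ 2 = ∫ u in (0 : ℝ)..1, bigLam lam u ^ 2 := by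
    calc ∫ u in (1 : ℝ)..2, bigLam lam u ^ 2
        = ∫ u in (0 : ℝ)..1, bigLam lam (2 - u) ^ 2 := by
          rw [intervalIntegral.integral_comp_sub_left fun u ↦ bigLam lam u ^ 2]
          norm_num
      _ = ∫ u in (0 : ℝ)..1, bigLam lam u ^ 2 := by
          refine intervalIntegral.integral_congr fun u hu ↦ ?_
          rw [uIcc_of_le zero_le_one] at hu
          simp only [hlam.bigLam_two_sub ⟨hu.1, hu.2.trans one_le_two⟩]
  rw [← intervalIntegral.integral_add_adjacent_intervals
    (hint.mono_set (uIcc_subset_uIcc left_mem_uIcc hone))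
    (hint.mono_set (uIcc_subset_uIcc hone right_mem_uIcc)), hreflect, ← two_mul]
  simp only [bigLam, neg_sq]
  exact Real.sqrt_eq_one.1 hlam.normalized

end IsPreAverageFn

lemma IsSimplifiedModel.memLp {Ω : Type*} [MeasureSpace Ω] {n : ℕ} {W η : ℕ → Ω → ℝ}
    (hmodel : IsSimplifiedModel n W η) {j : ℕ} (hj : j ≤ n) : MemLp (W j) 2 := by
  obtain ⟨hW, -, hgauss, -⟩ := hmodel
  obtain ⟨v, hv⟩ := hgauss (Pi.single j 1) 0
  have hsum : (fun ω ↦ ∑ k ∈ Finset.range (n + 1),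
      (Pi.single (M := fun _ ↦ ℝ) j 1 k * W k ω + (0 : ℕ → ℝ) k * η k ω)) = W j := by
    ext ω
    simp [Pi.single_apply, Nat.lt_succ_of_le hj]
  rw [hsum] at hv
  have hid : MemLp id 2 (Measure.map (W j) ℙ) := hv ▸ memLp_id_gaussianReal 2
  exact hid.comp_of_map (hW j).aemeasurable

theorem preAveragedBM_second_moment (σ τ c : ℝ) (hσ : 0 < σ) (hτ : 0 < τ) (hc : 0 < c)
    (lam : ℝ → ℝ) (hlam : IsPreAverageFn lam)
    (Ω : ℕ → Type*) [∀ n, MeasureSpace (Ω n)] [∀ n, IsProbabilityMeasure (ℙ : Measure (Ω n))]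
    (W η : (n : ℕ) → ℕ → Ω n → ℝ)
    (hmodel : ∀ n, IsSimplifiedModel n (W n) (η n)) :
    ∃ C > 0, ∃ N : ℕ, ∀ n ≥ N, ∀ i : ℕ, 2 ≤ i → i ≤ mOf c n →
      |(∫ ω, (preAvg lam n (mOf c n) (fun j ω => σ * W n j ω) i ω) ^ 2)
          - σ ^ 2 / (mOf c n : ℝ)| ≤ C / n := by
  simpa only [hlam.integral_bigLam_sq, mul_one] using
    preAveragedBM_second_moment_general σ c hc lam hlam.boundedVariationOn hlam.integral_eq_zero Ω
      (fun _ ↦ ℙ) W (fun n _ ↦ (hmodel n).memLp)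
      (fun n j hj l hl ↦ (hmodel n).2.2.2.1 j l hj hl)
end

section
/- In the simplified model (Case I of the covariance computation), there are constants C > 0 and N such that for all n ≥ N and all 2 ≤ i, k ≤ m with |i − k| ≥ 2, the pre-averaged observations on non-overlapping blocks satisfy |E[Ȳ_{i,m} Ȳ_{k,m}]| ≤ C/n (note E[Ȳ_{i,m}] = 0, so this is the covariance). -/
open MeasureTheory ProbabilityTheory Real

/-!
A piecewise Lipschitz function has bounded variation on `[0, 2]`. If `λ` is moreover antisymmetric
about the midpoint, then twice a sum of `λ` over a full grid of `[0, 2]` is the sum of the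
differences of `λ` between that grid and its mirror image. The mirror image is a translate by at
most one mesh width, so the two grids interlace and the total is at most the variation `V` of `λ`:
block sums of the weights are bounded by `V / 2`, uniformly in the mesh.

On non-overlapping blocks `min j l = j`, so the Brownian part of the covariance factorizes as
`(m/n)² σ² (∑ⱼ wⱼ j/n) (∑ₗ wₗ)`. Both factors are `O(1)`, the first because `j/n` differs from the
left end of its block by at most `2/m`. The noise contributes at most one diagonal term, and the
prefactor `(m/n)²` is `O(1/n)`.
-/

section BoundedVariation

variable {α E : Type*} [LinearOrder α]

lemma sum_edist_le_eVariationOn_of_interlacing [PseudoEMetricSpace E] (f : α → E) {s : Set α}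
    {x y : ℕ → α} {N : ℕ} (hxy : ∀ i, x i ≤ y i) (hyx : ∀ i, y i ≤ x (i + 1))
    (hxs : ∀ i < N, x i ∈ s) (hys : ∀ i < N, y i ∈ s) :
    ∑ i ∈ Finset.range N, edist (f (x i)) (f (y i)) ≤ eVariationOn f s := by
  have hx : Monotone x := monotone_nat_of_le_succ fun i => (hxy i).trans (hyx i)
  calc ∑ i ∈ Finset.range N, edist (f (x i)) (f (y i))
      ≤ ∑ i ∈ Finset.range N, eVariationOn f (s ∩ Set.Icc (x i) (x (i + 1))) := by
        refine Finset.sum_le_sum fun i hi => ?_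
        have hiN := Finset.mem_range.1 hi
        exact eVariationOn.edist_le f ⟨hxs i hiN, Set.left_mem_Icc.2 (hx i.le_succ)⟩
          ⟨hys i hiN, hxy i, hyx i⟩
    _ = eVariationOn f (s ∩ Set.Icc (x 0) (x N)) := eVariationOn.sum f hx fun i _ hi => hxs i hi
    _ ≤ eVariationOn f s := eVariationOn.mono f Set.inter_subset_left

lemma boundedVariationOn_Icc_of_forall_Icc_succ [PseudoEMetricSpace E] {f : α → E} {t : ℕ → α}
    {N : ℕ} (ht : ∀ i < N, t i ≤ t (i + 1))
    (hf : ∀ i < N, BoundedVariationOn f (Set.Icc (t i) (t (i + 1)))) :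
    BoundedVariationOn f (Set.Icc (t 0) (t N)) := by
  induction N with
  | zero => exact .of_subsingleton (by simp)
  | succ N ih =>
    have hsucc : t N ≤ t (N + 1) := ht N N.lt_succ_self
    have hlast := hf N N.lt_succ_self
    rcases le_total (t N) (t 0) with h | h
    · exact hlast.mono (Set.Icc_subset_Icc_left h)
    · have hinit := ih (fun i hi => ht i (hi.trans N.lt_succ_self))
        fun i hi => hf i (hi.trans N.lt_succ_self)
      rw [BoundedVariationOn, ← Set.Icc_union_Icc_eq_Icc h hsucc,
        eVariationOn.union f (isGreatest_Icc h) (isLeast_Icc hsucc)]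
      exact ENNReal.add_ne_top.2 ⟨hinit, hlast⟩

lemma boundedVariationOn_Icc_of_Ioo_s9 [TopologicalSpace α] [OrderTopology α] [DenselyOrdered α]
    [PseudoMetricSpace E] [CompleteSpace E] {f : α → E} {a b : α}
    (hf : BoundedVariationOn f (Set.Ioo a b)) : BoundedVariationOn f (Set.Icc a b) := by
  rcases le_or_gt b a with hba | hab
  · exact .of_subsingleton (Set.subsingleton_Icc_of_ge hba)
  have hIco : BoundedVariationOn f (Set.Ico a b) := by
    obtain ⟨l, hl⟩ := hf.exists_tendsto_right a
    have hIoo : Set.Ico a b ∩ Set.Ioi a = Set.Ioo a b := by grind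
    have hvar := eVariationOn.eVariationOn_on_inter_Ici_eq_Ioi_add_edist (s := Set.Ico a b)
      (by rw [hIoo]; exact left_nhdsWithin_Ioo_neBot hab) (Set.left_mem_Ico.2 hab)
      (hl.mono_left (nhdsWithin_mono _ (by grind)))
    rw [hIoo, Set.inter_eq_left.2 Set.Ico_subset_Ici_self] at hvar
    rw [BoundedVariationOn, hvar]
    exact ENNReal.add_ne_top.2 ⟨hf, edist_ne_top _ _⟩
  obtain ⟨l, hl⟩ := hIco.exists_tendsto_left b
  have hinter : Set.Icc a b ∩ Set.Iio b = Set.Ico a b := by grind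
  have hvar := eVariationOn.eVariationOn_on_inter_Iic_eq_Iio_add_edist (s := Set.Icc a b)
    (by rw [hinter]; exact right_nhdsWithin_Ico_neBot hab) (Set.right_mem_Icc.2 hab.le)
    (hl.mono_left (nhdsWithin_mono _ (by grind)))
  rw [hinter, Set.inter_eq_left.2 Set.Icc_subset_Iic_self] at hvar
  rw [BoundedVariationOn, hvar]
  exact ENNReal.add_ne_top.2 ⟨hIco, edist_ne_top _ _⟩

end BoundedVariation

/-- Half of the total variation of `f` on `s`, with junk value `0` if the variation is infinite.
For `f` of bounded variation and antisymmetric about the midpoint of an interval `s`, this bounds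
both `|f|` and the sums of `f` over full grids of `s`. -/
noncomputable def halfVariation (f : ℝ → ℝ) (s : Set ℝ) : ℝ := (eVariationOn f s).toReal / 2

lemma halfVariation_nonneg (f : ℝ → ℝ) (s : Set ℝ) : 0 ≤ halfVariation f s := by
  unfold halfVariation; positivity

section Antisymmetric

variable {f : ℝ → ℝ} {u v : ℝ}

lemma abs_le_halfVariation (hf : BoundedVariationOn f (Set.Icc u v))
    (hanti : ∀ x ∈ Set.Icc u v, f (u + v - x) = -f x) {x : ℝ} (hx : x ∈ Set.Icc u v) :
    |f x| ≤ halfVariation f (Set.Icc u v) := by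
  have hx' : u + v - x ∈ Set.Icc u v := ⟨by linarith [hx.2], by linarith [hx.1]⟩
  have hdist := hf.dist_le hx hx'
  rw [Real.dist_eq, hanti x hx, sub_neg_eq_add, ← two_mul, abs_mul, abs_two] at hdist
  rw [halfVariation]
  linarith

lemma sum_abs_sub_le_of_interlacing (hf : BoundedVariationOn f (Set.Icc u v)) {x y : ℕ → ℝ}
    {N : ℕ} (hxy : ∀ i, x i ≤ y i) (hyx : ∀ i, y i ≤ x (i + 1))
    (hx : ∀ i < N, x i ∈ Set.Icc u v) (hy : ∀ i < N, y i ∈ Set.Icc u v) :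
    ∑ i ∈ Finset.range N, |f (x i) - f (y i)| ≤ (eVariationOn f (Set.Icc u v)).toReal := by
  have hsum := ENNReal.toReal_mono hf (sum_edist_le_eVariationOn_of_interlacing f hxy hyx hx hy)
  rw [ENNReal.toReal_sum fun _ _ => edist_ne_top _ _] at hsum
  simpa only [← dist_edist, Real.dist_eq] using hsum

lemma sum_abs_sub_le_of_abs_sub_le (hf : BoundedVariationOn f (Set.Icc u v)) {x y δ : ℝ} {N : ℕ}
    (hxy : |x - y| ≤ δ) (hx : ∀ i < N, x + δ * i ∈ Set.Icc u v)
    (hy : ∀ i < N, y + δ * i ∈ Set.Icc u v) :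
    ∑ i ∈ Finset.range N, |f (x + δ * i) - f (y + δ * i)|
      ≤ (eVariationOn f (Set.Icc u v)).toReal := by
  wlog h : x ≤ y generalizing x y
  · simpa only [abs_sub_comm (f (x + _))] using
      this (by rwa [abs_sub_comm]) hy hx (le_of_not_ge h)
  have hyx : y ≤ x + δ := by linarith [neg_le_of_abs_le hxy]
  refine sum_abs_sub_le_of_interlacing (x := fun i => x + δ * i) (y := fun i => y + δ * i) hf
    (fun i => by gcongr) (fun i => ?_) hx hy
  push_cast
  linarith

lemma sum_range_eq_neg_sum_range_mirror (hanti : ∀ x ∈ Set.Icc u v, f (u + v - x) = -f x)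
    {x δ : ℝ} {N : ℕ} (hx : ∀ i < N, x + δ * i ∈ Set.Icc u v) :
    ∑ i ∈ Finset.range N, f (x + δ * i)
      = -∑ i ∈ Finset.range N, f (u + v - x - δ * (N - 1) + δ * i) := by
  rw [← Finset.sum_range_reflect, ← Finset.sum_neg_distrib]
  refine Finset.sum_congr rfl fun i hi => ?_
  have hiN := Finset.mem_range.1 hi
  have hmirror : u + v - x - δ * (N - 1) + δ * i = u + v - (x + δ * (N - 1 - i : ℕ)) := by
    rw [Nat.sub_sub, Nat.cast_sub (by omega)]
    push_cast
    ring
  rw [hmirror, hanti _ (hx _ (by omega)), neg_neg]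

lemma abs_sum_range_le_halfVariation (hf : BoundedVariationOn f (Set.Icc u v))
    (hanti : ∀ x ∈ Set.Icc u v, f (u + v - x) = -f x) {x δ : ℝ} {N : ℕ}
    (hfirst : x ∈ Set.Icc u (u + δ)) (hlast : x + δ * N ∈ Set.Icc v (v + δ)) :
    |∑ i ∈ Finset.range N, f (x + δ * i)| ≤ halfVariation f (Set.Icc u v) := by
  have hδ : 0 ≤ δ := by linarith [hfirst.1, hfirst.2]
  set y := u + v - x - δ * (N - 1)
  have hmem : ∀ i < N, x + δ * i ∈ Set.Icc u v ∧ y + δ * i ∈ Set.Icc u v := by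
    intro i hi
    have hi0 : 0 ≤ δ * i := by positivity
    have hiN : δ * (i + 1) ≤ δ * N := by gcongr; exact_mod_cast hi
    refine ⟨⟨?_, ?_⟩, ?_, ?_⟩ <;> linarith [hfirst.1, hlast.2]
  have hxy : |x - y| ≤ δ := by
    rw [abs_le]
    constructor <;> linarith [hfirst.1, hfirst.2, hlast.1, hlast.2]
  have hmirror : ∑ i ∈ Finset.range N, f (x + δ * i) = -∑ i ∈ Finset.range N, f (y + δ * i) :=
    sum_range_eq_neg_sum_range_mirror hanti fun i hi => (hmem i hi).1
  have htwice : 2 * |∑ i ∈ Finset.range N, f (x + δ * i)|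
      ≤ (eVariationOn f (Set.Icc u v)).toReal :=
    calc 2 * |∑ i ∈ Finset.range N, f (x + δ * i)|
        = |∑ i ∈ Finset.range N, (f (x + δ * i) - f (y + δ * i))| := by
          rw [Finset.sum_sub_distrib, ← abs_two, ← abs_mul]
          congr 1
          linarith
      _ ≤ ∑ i ∈ Finset.range N, |f (x + δ * i) - f (y + δ * i)| := Finset.abs_sum_le_sum_abs _ _
      _ ≤ _ := sum_abs_sub_le_of_abs_sub_le hf hxy (fun i hi => (hmem i hi).1)
          fun i hi => (hmem i hi).2
  rw [halfVariation]
  linarith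

end Antisymmetric

section Grid

variable {δ r u v : ℝ} {S : Finset ℕ}

lemma exists_eq_Ico_of_mem_iff (hδ : 0 < δ) (huv : u ≤ v) (hr : 0 ≤ r + u)
    (hS : ∀ j : ℕ, j ∈ S ↔ δ * j - r ∈ Set.Icc u v) :
    ∃ a b : ℕ, a ≤ b ∧ S = Finset.Ico a b ∧
      δ * a - r ∈ Set.Icc u (u + δ) ∧ δ * b - r ∈ Set.Icc v (v + δ) := by
  have hru : 0 ≤ (r + u) / δ := by positivity
  have hrv : 0 ≤ (r + v) / δ := div_nonneg (by linarith) hδ.le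
  have ha : r + u ≤ δ * ⌈(r + u) / δ⌉₊ := (div_le_iff₀' hδ).1 (Nat.le_ceil _)
  have ha' : δ * ⌈(r + u) / δ⌉₊ < r + u + δ := by
    have h := mul_lt_mul_of_pos_left (Nat.ceil_lt_add_one hru) hδ
    rwa [mul_add, mul_div_cancel₀ _ hδ.ne', mul_one] at h
  have hb : δ * ⌊(r + v) / δ⌋₊ ≤ r + v := (le_div_iff₀' hδ).1 (Nat.floor_le hrv)
  have hb' : r + v < δ * (⌊(r + v) / δ⌋₊ + 1) := (div_lt_iff₀' hδ).1 (Nat.lt_floor_add_one _)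
  refine ⟨⌈(r + u) / δ⌉₊, ⌊(r + v) / δ⌋₊ + 1, ?_, ?_, ⟨?_, ?_⟩, ?_, ?_⟩
  · rw [Nat.ceil_le]
    push_cast
    rw [div_le_iff₀' hδ]
    linarith
  · ext j
    rw [hS, Finset.mem_Ico, Nat.ceil_le, Nat.lt_succ_iff, Nat.le_floor_iff hrv, Set.mem_Icc,
      div_le_iff₀' hδ, le_div_iff₀' hδ, le_sub_iff_add_le', sub_le_iff_le_add']
  all_goals
    push_cast
    linarith

lemma card_mul_le_of_mem_iff (hδ : 0 < δ) (huv : u ≤ v) (hr : 0 ≤ r + u)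
    (hS : ∀ j : ℕ, j ∈ S ↔ δ * j - r ∈ Set.Icc u v) : (S.card : ℝ) * δ ≤ v - u + δ := by
  obtain ⟨a, b, hab, rfl, ha, hb⟩ := exists_eq_Ico_of_mem_iff hδ huv hr hS
  rw [Nat.card_Ico, Nat.cast_sub hab]
  linarith [ha.1, hb.2]

lemma abs_sum_grid_le_halfVariation {f : ℝ → ℝ} (hf : BoundedVariationOn f (Set.Icc u v))
    (hanti : ∀ x ∈ Set.Icc u v, f (u + v - x) = -f x) (hδ : 0 < δ) (huv : u ≤ v)
    (hr : 0 ≤ r + u) (hS : ∀ j : ℕ, j ∈ S ↔ δ * j - r ∈ Set.Icc u v) :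
    |∑ j ∈ S, f (δ * j - r)| ≤ halfVariation f (Set.Icc u v) := by
  obtain ⟨a, b, hab, rfl, ha, hb⟩ := exists_eq_Ico_of_mem_iff hδ huv hr hS
  have hshift : ∀ i : ℕ, δ * (a + i : ℕ) - r = δ * a - r + δ * i := fun i => by push_cast; ring
  simp only [Finset.sum_Ico_eq_sum_range, hshift]
  refine abs_sum_range_le_halfVariation hf hanti ha ?_
  rwa [← hshift, Nat.add_sub_cancel' hab]

end Grid

namespace IsPreAverageFn

variable {lam : ℝ → ℝ}

lemma boundedVariationOn_s9 (h : IsPreAverageFn lam) : BoundedVariationOn lam (Set.Icc 0 2) := by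
  obtain ⟨N, t, K, -, ht0, htN, ht, hlip⟩ := h.piecewise_lipschitz
  rw [← ht0, ← htN]
  refine boundedVariationOn_Icc_of_forall_Icc_succ (fun i hi => (ht i hi).le) fun i hi => ?_
  exact boundedVariationOn_Icc_of_Ioo_s9 ((hlip i hi).comp_boundedVariationOn (Set.mapsTo_id _)
    ((BoundedVariationOn.id_Icc _ _).mono Set.Ioo_subset_Icc_self))

lemma antisymm_Icc_zero_two (h : IsPreAverageFn lam) :
    ∀ x ∈ Set.Icc (0 : ℝ) 2, lam (2 - x) = -lam x := by
  rintro x ⟨hx0, hx2⟩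
  rcases le_total x 1 with hx1 | hx1
  · rw [h.antisymm x ⟨hx0, hx1⟩, neg_neg]
  · rw [h.antisymm (2 - x) ⟨by linarith, by linarith⟩, sub_sub_cancel]

end IsPreAverageFn

/-- The weight `λ(m j/n - (i-2))` of the `j`-th observation in the pre-average `Ȳ_{i,m}`. -/
noncomputable def preAvgWeight (lam : ℝ → ℝ) (n m i j : ℕ) : ℝ :=
  lam ((m : ℝ) * j / n - ((i : ℝ) - 2))

section Blocks

variable {lam : ℝ → ℝ} {n m i k : ℕ}

lemma le_of_mem_blockIdx {j : ℕ} (hj : j ∈ blockIdx n m i) : j ≤ n :=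
  Nat.lt_succ_iff.1 (Finset.mem_range.1 (Finset.mem_filter.1 hj).1)

lemma mem_blockIdx_iff_s9 (hn : 0 < n) (hm : 0 < m) (him : i ≤ m) (j : ℕ) :
    j ∈ blockIdx n m i ↔ (m / n : ℝ) * j - ((i : ℝ) - 2) ∈ Set.Icc (0 : ℝ) 2 := by
  have hn' : (0 : ℝ) < n := by exact_mod_cast hn
  have hm' : (0 : ℝ) < m := by exact_mod_cast hm
  have hlower : ((i : ℝ) - 2) / m ≤ j / n ↔ 0 ≤ (m / n : ℝ) * j - ((i : ℝ) - 2) := by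
    rw [div_le_iff₀' hm', sub_nonneg, mul_div_left_comm, mul_comm (j : ℝ)]
  have hupper : (j : ℝ) / n ≤ i / m ↔ (m / n : ℝ) * j - ((i : ℝ) - 2) ≤ 2 := by
    rw [le_div_iff₀' hm', sub_le_iff_le_add, add_sub_cancel, mul_div_left_comm, mul_comm (j : ℝ)]
  have hjn : (j : ℝ) / n ≤ i / m → j < n + 1 := by
    intro h
    have him' : (i : ℝ) / m ≤ 1 := (div_le_one hm').2 (by exact_mod_cast him)
    have : (j : ℝ) ≤ n := (div_le_one hn').1 (h.trans him')
    exact Nat.lt_succ_iff.2 (by exact_mod_cast this)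
  rw [blockIdx, Finset.mem_filter, Finset.mem_range, Set.mem_Icc, ← hlower, ← hupper]
  exact ⟨And.right, fun h => ⟨hjn h.2, h⟩⟩

lemma le_of_mem_blockIdx_of_add_two_le (hn : 0 < n) (hik : i + 2 ≤ k) {j l : ℕ}
    (hj : j ∈ blockIdx n m i) (hl : l ∈ blockIdx n m k) : j ≤ l := by
  have hn' : (0 : ℝ) < n := by exact_mod_cast hn
  have hik' : (i : ℝ) ≤ k - 2 := le_sub_iff_add_le.2 (by exact_mod_cast hik)
  have hjl : (j : ℝ) / n ≤ l / n :=
    calc (j : ℝ) / n ≤ i / m := (Finset.mem_filter.1 hj).2.2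
      _ ≤ (k - 2) / m := by gcongr
      _ ≤ l / n := (Finset.mem_filter.1 hl).2.1
  exact_mod_cast (div_le_div_iff_of_pos_right hn').1 hjl

lemma preAvgWeight_eq (lam : ℝ → ℝ) (n m i j : ℕ) :
    preAvgWeight lam n m i j = lam ((m / n : ℝ) * j - ((i : ℝ) - 2)) := by
  rw [preAvgWeight, mul_div_right_comm]

lemma abs_preAvgWeight_le (hlam : BoundedVariationOn lam (Set.Icc 0 2))
    (hanti : ∀ x ∈ Set.Icc (0 : ℝ) 2, lam (2 - x) = -lam x) (hn : 0 < n) (hm : 0 < m)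
    (him : i ≤ m) {j : ℕ} (hj : j ∈ blockIdx n m i) :
    |preAvgWeight lam n m i j| ≤ halfVariation lam (Set.Icc 0 2) := by
  rw [preAvgWeight_eq]
  exact abs_le_halfVariation hlam (by simpa only [zero_add] using hanti)
    ((mem_blockIdx_iff_s9 hn hm him j).1 hj)

lemma abs_sum_preAvgWeight_le (hlam : BoundedVariationOn lam (Set.Icc 0 2))
    (hanti : ∀ x ∈ Set.Icc (0 : ℝ) 2, lam (2 - x) = -lam x) (hn : 0 < n) (hm : 0 < m)
    (hi : 2 ≤ i) (him : i ≤ m) :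
    |∑ j ∈ blockIdx n m i, preAvgWeight lam n m i j| ≤ halfVariation lam (Set.Icc 0 2) := by
  have hi' : (2 : ℝ) ≤ i := by exact_mod_cast hi
  simp only [preAvgWeight_eq]
  exact abs_sum_grid_le_halfVariation hlam (by simpa only [zero_add] using hanti)
    (by positivity) zero_le_two (by linarith) (mem_blockIdx_iff_s9 hn hm him)

lemma card_blockIdx_le (hm : 0 < m) (hmn : m ≤ n) (hi : 2 ≤ i) (him : i ≤ m) :
    ((blockIdx n m i).card : ℝ) ≤ 3 * n / m := by
  have hn : 0 < n := hm.trans_le hmn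
  have hi' : (2 : ℝ) ≤ i := by exact_mod_cast hi
  have hδ : (m / n : ℝ) ≤ 1 := div_le_one_of_le₀ (by exact_mod_cast hmn) n.cast_nonneg
  have hcard := card_mul_le_of_mem_iff (by positivity) zero_le_two (by linarith)
    (mem_blockIdx_iff_s9 hn hm him)
  rw [← div_div_eq_mul_div, le_div_iff₀ (by positivity)]
  linarith

lemma abs_sum_preAvgWeight_mul_sub_le (hlam : BoundedVariationOn lam (Set.Icc 0 2))
    (hanti : ∀ x ∈ Set.Icc (0 : ℝ) 2, lam (2 - x) = -lam x) (hm : 0 < m) (hmn : m ≤ n)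
    (hi : 2 ≤ i) (him : i ≤ m) :
    |∑ j ∈ blockIdx n m i, preAvgWeight lam n m i j * (j / n - (i - 2) / m)|
      ≤ halfVariation lam (Set.Icc 0 2) * (6 * n / m ^ 2) := by
  set B := halfVariation lam (Set.Icc 0 2)
  have hB : 0 ≤ B := halfVariation_nonneg _ _
  have hn : 0 < n := hm.trans_le hmn
  have hterm : ∀ j ∈ blockIdx n m i,
      |preAvgWeight lam n m i j * (j / n - (i - 2) / m)| ≤ B * (2 / m) := by
    intro j hj
    obtain ⟨hleft, hright⟩ := (Finset.mem_filter.1 hj).2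
    have hwidth : (j : ℝ) / n - (i - 2) / m ≤ 2 / m := by
      rwa [sub_le_iff_le_add, ← add_div, add_sub_cancel]
    rw [abs_mul, abs_of_nonneg (sub_nonneg.2 hleft)]
    exact mul_le_mul (abs_preAvgWeight_le hlam hanti hn hm him hj) hwidth
      (sub_nonneg.2 hleft) hB
  calc |∑ j ∈ blockIdx n m i, preAvgWeight lam n m i j * (j / n - (i - 2) / m)|
      ≤ (blockIdx n m i).card * (B * (2 / m)) := by
        rw [← nsmul_eq_mul]
        exact (Finset.abs_sum_le_sum_abs _ _).trans (Finset.sum_le_card_nsmul _ _ _ hterm)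
    _ ≤ 3 * n / m * (B * (2 / m)) := by gcongr; exact card_blockIdx_le hm hmn hi him
    _ = B * (6 * n / m ^ 2) := by field_simp; ring

lemma abs_sum_preAvgWeight_mul_div_le (hlam : BoundedVariationOn lam (Set.Icc 0 2))
    (hanti : ∀ x ∈ Set.Icc (0 : ℝ) 2, lam (2 - x) = -lam x) (hm : 0 < m) (hmn : m ≤ n)
    (hi : 2 ≤ i) (him : i ≤ m) :
    |∑ j ∈ blockIdx n m i, preAvgWeight lam n m i j * (j / n)|
      ≤ halfVariation lam (Set.Icc 0 2) * (6 * n / m ^ 2 + 1) := by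
  set B := halfVariation lam (Set.Icc 0 2)
  have hm' : (0 : ℝ) < m := by exact_mod_cast hm
  have hi' : (2 : ℝ) ≤ i := by exact_mod_cast hi
  have him' : (i : ℝ) ≤ m := by exact_mod_cast him
  have hdecomp : ∑ j ∈ blockIdx n m i, preAvgWeight lam n m i j * (j / n)
      = ∑ j ∈ blockIdx n m i, preAvgWeight lam n m i j * (j / n - (i - 2) / m)
        + (∑ j ∈ blockIdx n m i, preAvgWeight lam n m i j) * ((i - 2) / m) := by
    rw [Finset.sum_mul, ← Finset.sum_add_distrib]
    exact Finset.sum_congr rfl fun j _ => by ring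
  have hleft : |(∑ j ∈ blockIdx n m i, preAvgWeight lam n m i j) * ((i - 2) / m)| ≤ B := by
    have hratio0 : 0 ≤ ((i : ℝ) - 2) / m := div_nonneg (by linarith) hm'.le
    have hratio1 : ((i : ℝ) - 2) / m ≤ 1 := (div_le_one hm').2 (by linarith)
    rw [abs_mul, abs_of_nonneg hratio0, ← mul_one B]
    exact mul_le_mul (abs_sum_preAvgWeight_le hlam hanti (hm.trans_le hmn) hm hi him) hratio1
      hratio0 (halfVariation_nonneg _ _)
  rw [hdecomp, mul_add, mul_one]
  exact (abs_add_le _ _).trans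
    (add_le_add (abs_sum_preAvgWeight_mul_sub_le hlam hanti hm hmn hi him) hleft)

lemma abs_sum_inter_preAvgWeight_mul_le (hlam : BoundedVariationOn lam (Set.Icc 0 2))
    (hanti : ∀ x ∈ Set.Icc (0 : ℝ) 2, lam (2 - x) = -lam x) (hn : 0 < n) (hik : i + 2 ≤ k)
    (hkm : k ≤ m) :
    |∑ j ∈ blockIdx n m i ∩ blockIdx n m k, preAvgWeight lam n m i j * preAvgWeight lam n m k j|
      ≤ halfVariation lam (Set.Icc 0 2) ^ 2 := by
  set B := halfVariation lam (Set.Icc 0 2)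
  have hB : 0 ≤ B := halfVariation_nonneg _ _
  have hm : 0 < m := by omega
  have hcard : (blockIdx n m i ∩ blockIdx n m k).card ≤ 1 := by
    refine Finset.card_le_one.2 fun j hj l hl => ?_
    rw [Finset.mem_inter] at hj hl
    exact (le_of_mem_blockIdx_of_add_two_le hn hik hj.1 hl.2).antisymm
      (le_of_mem_blockIdx_of_add_two_le hn hik hl.1 hj.2)
  have hterm : ∀ j ∈ blockIdx n m i ∩ blockIdx n m k,
      |preAvgWeight lam n m i j * preAvgWeight lam n m k j| ≤ B ^ 2 := by
    intro j hj
    rw [Finset.mem_inter] at hj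
    rw [abs_mul, sq]
    exact mul_le_mul (abs_preAvgWeight_le hlam hanti hn hm (by omega) hj.1)
      (abs_preAvgWeight_le hlam hanti hn hm hkm hj.2) (abs_nonneg _) hB
  calc _ ≤ (blockIdx n m i ∩ blockIdx n m k).card • B ^ 2 :=
        (Finset.abs_sum_le_sum_abs _ _).trans (Finset.sum_le_card_nsmul _ _ _ hterm)
    _ ≤ 1 • B ^ 2 := nsmul_le_nsmul_left (sq_nonneg B) hcard
    _ = B ^ 2 := one_nsmul _

end Blocks

/-- `Y 0, …, Y n` have the second moments of Brownian motion of volatility `σ`, sampled on the grid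
`j/n` and perturbed by uncorrelated noise of standard deviation `τ`. -/
structure HasNoisyBrownianMoments {Ω : Type*} [MeasurableSpace Ω] (μ : Measure Ω) (σ τ : ℝ) (n : ℕ)
    (Y : ℕ → Ω → ℝ) : Prop where
  memLp_two : ∀ j ≤ n, MemLp (Y j) 2 μ
  integral_mul : ∀ j l, j ≤ n → l ≤ n →
    ∫ ω, Y j ω * Y l ω ∂μ = σ ^ 2 * ((min j l : ℝ) / n) + τ ^ 2 * if j = l then 1 else 0

namespace IsSimplifiedModel

variable {Ω : Type*} [MeasureSpace Ω] {n : ℕ} {W η : ℕ → Ω → ℝ}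

lemma hasGaussianLaw_linearCombination (h : IsSimplifiedModel n W η) (a b : ℕ → ℝ) :
    HasGaussianLaw (fun ω => ∑ j ∈ Finset.range (n + 1), (a j * W j ω + b j * η j ω)) ℙ := by
  obtain ⟨-, -, hgauss, -⟩ := h
  obtain ⟨v, hv⟩ := hgauss a b
  exact ⟨hv ▸ inferInstance⟩

lemma memLp_two_signal (h : IsSimplifiedModel n W η) {j : ℕ} (hj : j ≤ n) : MemLp (W j) 2 ℙ := by
  simpa [Nat.lt_succ_iff, hj] using
    (h.hasGaussianLaw_linearCombination (fun k => if k = j then 1 else 0) 0).memLp_two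

lemma memLp_two_noise (h : IsSimplifiedModel n W η) {j : ℕ} (hj : j ≤ n) : MemLp (η j) 2 ℙ := by
  simpa [Nat.lt_succ_iff, hj] using
    (h.hasGaussianLaw_linearCombination 0 (fun k => if k = j then 1 else 0)).memLp_two

lemma hasNoisyBrownianMoments_obs (h : IsSimplifiedModel n W η) (σ τ : ℝ) :
    HasNoisyBrownianMoments ℙ σ τ n (obs σ τ W η) where
  memLp_two j hj := ((h.memLp_two_signal hj).const_mul σ).add ((h.memLp_two_noise hj).const_mul τ)
  integral_mul j l hj hl := by
    have hWj := h.memLp_two_signal hj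
    have hWl := h.memLp_two_signal hl
    have hηj := h.memLp_two_noise hj
    have hηl := h.memLp_two_noise hl
    obtain ⟨-, -, -, hWW, hηη, hWη⟩ := h
    have hexpand : ∀ ω, obs σ τ W η j ω * obs σ τ W η l ω =
        (σ ^ 2 * (W j ω * W l ω) + σ * τ * (W j ω * η l ω)) +
          (σ * τ * (W l ω * η j ω) + τ ^ 2 * (η j ω * η l ω)) := fun ω => by
      simp only [obs]
      ring
    have hint1 := (hWj.integrable_mul hWl).const_mul (σ ^ 2)
    have hint2 := (hWj.integrable_mul hηl).const_mul (σ * τ)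
    have hint3 := (hWl.integrable_mul hηj).const_mul (σ * τ)
    have hint4 := (hηj.integrable_mul hηl).const_mul (τ ^ 2)
    simp only [Pi.mul_apply] at hint1 hint2 hint3 hint4
    simp only [hexpand]
    rw [integral_add (by exact hint1.add hint2) (by exact hint3.add hint4),
      integral_add hint1 hint2, integral_add hint3 hint4]
    simp only [integral_const_mul, hWW j l hj hl, hηη j l hj hl, hWη j l hj hl, hWη l j hl hj]
    ring

end IsSimplifiedModel

section Covariance

variable {Ω : Type*} [MeasurableSpace Ω] {μ : Measure Ω}

lemma integral_preAvg_mul_preAvg {n : ℕ} {Y : ℕ → Ω → ℝ} (hY : ∀ j ≤ n, MemLp (Y j) 2 μ)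
    (lam : ℝ → ℝ) (m i k : ℕ) :
    ∫ ω, preAvg lam n m Y i ω * preAvg lam n m Y k ω ∂μ =
      (m / n : ℝ) ^ 2 * ∑ j ∈ blockIdx n m i, ∑ l ∈ blockIdx n m k,
        preAvgWeight lam n m i j * preAvgWeight lam n m k l * ∫ ω, Y j ω * Y l ω ∂μ := by
  have hint : ∀ j ∈ blockIdx n m i, ∀ l ∈ blockIdx n m k, Integrable (fun ω =>
      preAvgWeight lam n m i j * preAvgWeight lam n m k l * (Y j ω * Y l ω)) μ := fun j hj l hl =>
    ((hY j (le_of_mem_blockIdx hj)).integrable_mul (hY l (le_of_mem_blockIdx hl))).const_mul _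
  have hexpand : ∀ ω, preAvg lam n m Y i ω * preAvg lam n m Y k ω =
      (m / n : ℝ) ^ 2 * ∑ j ∈ blockIdx n m i, ∑ l ∈ blockIdx n m k,
        preAvgWeight lam n m i j * preAvgWeight lam n m k l * (Y j ω * Y l ω) := fun ω => by
    simp only [preAvg, preAvgWeight]
    rw [mul_mul_mul_comm, ← sq, Finset.sum_mul_sum]
    simp only [mul_mul_mul_comm]
  simp only [hexpand]
  rw [integral_const_mul, integral_finsetSum _ fun j hj => integrable_finsetSum _ (hint j hj)]
  congr 1
  refine Finset.sum_congr rfl fun j hj => ?_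
  rw [integral_finsetSum _ (hint j hj)]
  simp only [integral_const_mul]

lemma sum_sum_mul_min_add_ite {S T : Finset ℕ} (hST : ∀ j ∈ S, ∀ l ∈ T, j ≤ l) (f g : ℕ → ℝ)
    (p q x : ℝ) :
    ∑ j ∈ S, ∑ l ∈ T, f j * g l * (p * ((min j l : ℝ) / x) + q * if j = l then 1 else 0) =
      p * ((∑ j ∈ S, f j * (j / x)) * ∑ l ∈ T, g l) + q * ∑ j ∈ S ∩ T, f j * g j := by
  have hmin : ∀ j ∈ S, ∀ l ∈ T, (min j l : ℝ) = j := fun j hj l hl =>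
    min_eq_left (by exact_mod_cast hST j hj l hl)
  have hdiag : ∑ j ∈ S ∩ T, f j * g j = ∑ j ∈ S, ∑ l ∈ T, if j = l then f j * g l else 0 := by
    simp only [Finset.sum_ite_eq, ← Finset.filter_mem_eq_inter, Finset.sum_filter]
  rw [hdiag, Finset.sum_mul_sum]
  simp only [Finset.mul_sum, ← Finset.sum_add_distrib]
  refine Finset.sum_congr rfl fun j hj => Finset.sum_congr rfl fun l hl => ?_
  rw [hmin j hj l hl]
  split_ifs <;> ring

theorem abs_integral_preAvg_mul_preAvg_le {lam : ℝ → ℝ}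
    (hlam : BoundedVariationOn lam (Set.Icc 0 2))
    (hanti : ∀ x ∈ Set.Icc (0 : ℝ) 2, lam (2 - x) = -lam x) {σ τ : ℝ} {n m : ℕ}
    {Y : ℕ → Ω → ℝ} (hY : HasNoisyBrownianMoments μ σ τ n Y) (hmn : m ≤ n) {i k : ℕ}
    (hi : 2 ≤ i) (hik : i + 2 ≤ k) (hkm : k ≤ m) :
    |∫ ω, preAvg lam n m Y i ω * preAvg lam n m Y k ω ∂μ|
      ≤ halfVariation lam (Set.Icc 0 2) ^ 2
        * (6 * σ ^ 2 / n + (σ ^ 2 + τ ^ 2) * (m / n : ℝ) ^ 2) := by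
  have hm : 0 < m := by omega
  have hn : 0 < n := by omega
  have hsplit : ∫ ω, preAvg lam n m Y i ω * preAvg lam n m Y k ω ∂μ = (m / n : ℝ) ^ 2 *
      (σ ^ 2 * ((∑ j ∈ blockIdx n m i, preAvgWeight lam n m i j * (j / n))
          * ∑ l ∈ blockIdx n m k, preAvgWeight lam n m k l)
        + τ ^ 2 * ∑ j ∈ blockIdx n m i ∩ blockIdx n m k,
          preAvgWeight lam n m i j * preAvgWeight lam n m k j) := by
    rw [integral_preAvg_mul_preAvg hY.memLp_two, ← sum_sum_mul_min_add_ite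
      fun j hj l hl => le_of_mem_blockIdx_of_add_two_le hn hik hj hl]
    congr 1
    exact Finset.sum_congr rfl fun j hj => Finset.sum_congr rfl fun l hl => by
      rw [hY.integral_mul j l (le_of_mem_blockIdx hj) (le_of_mem_blockIdx hl)]
  have hmoment := abs_sum_preAvgWeight_mul_div_le hlam hanti hm hmn hi (by omega)
  have hsum := abs_sum_preAvgWeight_le hlam hanti hn hm (by omega) hkm
  have hdiag := abs_sum_inter_preAvgWeight_mul_le hlam hanti hn hik hkm
  have hB := halfVariation_nonneg lam (Set.Icc 0 2)
  set B := halfVariation lam (Set.Icc 0 2)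
  rw [hsplit, abs_mul, abs_of_nonneg (sq_nonneg (m / n : ℝ))]
  calc _ ≤ (m / n : ℝ) ^ 2 * (σ ^ 2 * (B * (6 * n / m ^ 2 + 1) * B) + τ ^ 2 * B ^ 2) := by
        grw [abs_add_le, abs_mul, abs_mul, abs_mul, hmoment, hsum, hdiag]
        rw [abs_of_nonneg (sq_nonneg σ), abs_of_nonneg (sq_nonneg τ)]
    _ = B ^ 2 * (6 * σ ^ 2 / n + (σ ^ 2 + τ ^ 2) * (m / n : ℝ) ^ 2) := by
        field_simp
        ring

end Covariance

lemma mOf_le (c : ℝ) (n : ℕ) : mOf c n ≤ n := Nat.div_le_self _ _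

lemma mOf_le_two_mul_sqrt {c : ℝ} (hc : 0 < c) {n : ℕ} (hn : c ≤ √n) :
    (mOf c n : ℝ) ≤ 2 * c * √n := by
  have hsqrt : 0 < √(n : ℝ) := hc.trans_le hn
  have hfloor : √n / c / 2 < ⌊√n / c⌋₊ := Nat.div_two_lt_floor ((one_le_div hc).2 hn)
  calc (mOf c n : ℝ) ≤ n / ⌊√n / c⌋₊ := Nat.cast_div_le
    _ ≤ n / (√n / c / 2) := by gcongr
    _ = 2 * c * √n := by
      field_simp
      rw [Real.sq_sqrt n.cast_nonneg]

lemma sq_mOf_div_le {c : ℝ} (hc : 0 < c) {n : ℕ} (hn : c ≤ √n) :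
    (mOf c n / n : ℝ) ^ 2 ≤ 4 * c ^ 2 / n := by
  have hn0 : (0 : ℝ) < n := Real.sqrt_pos.1 (hc.trans_le hn)
  calc (mOf c n / n : ℝ) ^ 2 ≤ (2 * c * √n / n) ^ 2 := by
        gcongr
        exact mOf_le_two_mul_sqrt hc hn
    _ = 4 * c ^ 2 / n := by
        rw [div_pow, mul_pow, Real.sq_sqrt n.cast_nonneg]
        field_simp
        ring

theorem preAveragedObs_nonoverlapping_covariance_general (σ τ : ℝ) {c : ℝ} (hc : 0 < c)
    {lam : ℝ → ℝ} (hlam : BoundedVariationOn lam (Set.Icc 0 2))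
    (hanti : ∀ x ∈ Set.Icc (0 : ℝ) 2, lam (2 - x) = -lam x)
    {Ω : ℕ → Type*} [∀ n, MeasurableSpace (Ω n)] {μ : (n : ℕ) → Measure (Ω n)}
    {Y : (n : ℕ) → ℕ → Ω n → ℝ} (hY : ∀ n, HasNoisyBrownianMoments (μ n) σ τ n (Y n)) :
    ∃ C > 0, ∃ N : ℕ, ∀ n ≥ N, ∀ i k : ℕ, 2 ≤ i → i ≤ mOf c n → 2 ≤ k → k ≤ mOf c n →
      2 ≤ |(i : ℤ) - (k : ℤ)| →
      |∫ ω, preAvg lam n (mOf c n) (Y n) i ω * preAvg lam n (mOf c n) (Y n) k ω ∂μ n|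
        ≤ C / n := by
  set B := halfVariation lam (Set.Icc 0 2)
  refine ⟨B ^ 2 * (6 * σ ^ 2 + (σ ^ 2 + τ ^ 2) * (4 * c ^ 2)) + 1, by positivity, ⌈c ^ 2⌉₊, ?_⟩
  intro n hn i k hi him hk hkm hik
  wlog hlt : i < k generalizing i k
  · simpa only [mul_comm] using this k i hk hkm hi him (by rwa [abs_sub_comm]) (by grind)
  have hcn : c ≤ √n := Real.le_sqrt_of_sq_le (Nat.ceil_le.1 hn)
  calc _ ≤ B ^ 2 * (6 * σ ^ 2 / n + (σ ^ 2 + τ ^ 2) * (mOf c n / n : ℝ) ^ 2) :=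
        abs_integral_preAvg_mul_preAvg_le hlam hanti (hY n) (mOf_le c n) hi (by grind) hkm
    _ ≤ B ^ 2 * (6 * σ ^ 2 / n + (σ ^ 2 + τ ^ 2) * (4 * c ^ 2 / n)) := by
        gcongr
        exact sq_mOf_div_le hc hcn
    _ = B ^ 2 * (6 * σ ^ 2 + (σ ^ 2 + τ ^ 2) * (4 * c ^ 2)) / n := by ring
    _ ≤ _ := by
        gcongr
        linarith

theorem preAveragedObs_nonoverlapping_covariance (σ τ c : ℝ) (hσ : 0 < σ) (hτ : 0 < τ) (hc : 0 < c)
    (lam : ℝ → ℝ) (hlam : IsPreAverageFn lam)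
    (Ω : ℕ → Type*) [∀ n, MeasureSpace (Ω n)] [∀ n, IsProbabilityMeasure (ℙ : Measure (Ω n))]
    (W η : (n : ℕ) → ℕ → Ω n → ℝ)
    (hmodel : ∀ n, IsSimplifiedModel n (W n) (η n)) :
    ∃ C > 0, ∃ N : ℕ, ∀ n ≥ N, ∀ i k : ℕ, 2 ≤ i → i ≤ mOf c n → 2 ≤ k → k ≤ mOf c n →
      2 ≤ |(i : ℤ) - (k : ℤ)| →
      |∫ ω, preAvg lam n (mOf c n) (obs σ τ (W n) (η n)) i ω *
            preAvg lam n (mOf c n) (obs σ τ (W n) (η n)) k ω| ≤ C / n := by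
  exact preAveragedObs_nonoverlapping_covariance_general σ τ hc hlam.boundedVariationOn_s9
    hlam.antisymm_Icc_zero_two fun n => (hmodel n).hasNoisyBrownianMoments_obs σ τ
end
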